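/- For every real constant A with 0 < A ≤ 1, there exists an infinitely differentiable function G : [-1, 1] → ℝ such that: (1) G'(s) > 0 for all s ∈ [-1, 1]; (2) G''(s) ≥ 0 for all s ∈ [-1, 1]; (3) there exists δ > 0 such that G(s) = A·(exp(s) − exp(−1)) − 1 for all s ∈ [-1, -1 + δ]; and (4) there exists ε > 0 such that G(s) = 2s for all s ∈ [-1, 1] with |s| ≤ ε. -/

import Mathlib

theorem st_symm (x : ℝ) : Real.smoothTransition x + Real.smoothTransition (1 - x) = 1 := by
  have h := Real.smoothTransition.pos_denom x
  unfold Real.smoothTransition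
  rw [show 1 - (1 - x) = x by ring, add_comm (expNegInvGlue (1 - x)) (expNegInvGlue x),
    ← add_div, div_self h.ne']

theorem eng_mono : Monotone expNegInvGlue := by
  intro x y hxy
  rcases le_or_gt x 0 with hx | hx
  · rw [expNegInvGlue.zero_of_nonpos hx]; exact expNegInvGlue.nonneg y
  · have hy : 0 < y := hx.trans_le hxy
    simp only [expNegInvGlue, not_le.2 hx, not_le.2 hy, if_false]
    apply Real.exp_le_exp.2
    have := inv_anti₀ hx hxy
    linarith

theorem st_mono : Monotone Real.smoothTransition := by
  intro x y hxy
  have h := Real.smoothTransition.pos_denom x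
  have h' := Real.smoothTransition.pos_denom y
  unfold Real.smoothTransition
  rw [div_le_div_iff₀ h h']
  have h1 := eng_mono hxy
  have h2 : expNegInvGlue (1 - y) ≤ expNegInvGlue (1 - x) := eng_mono (by linarith)
  have h3 := mul_le_mul h1 h2 (expNegInvGlue.nonneg _) (expNegInvGlue.nonneg _)
  nlinarith

/-- A smooth convex regularisation of `max t 0`. -/
theorem exists_phi : ∃ φ ψ : ℝ → ℝ, ContDiff ℝ (⊤ : ℕ∞) φ ∧ ContDiff ℝ (⊤ : ℕ∞) ψ ∧
    (∀ t, HasDerivAt φ (ψ t) t) ∧ (∀ t, 0 ≤ ψ t) ∧ (∀ t, ψ t ≤ 1) ∧ Monotone ψ ∧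
    (∀ t ≤ -(1/4), φ t = 0) ∧ (∀ t ≥ 1/4, φ t = t) := by
  let ψ : ℝ → ℝ := fun u => Real.smoothTransition (2 * u + 1/2)
  have hψ : ContDiff ℝ (⊤ : ℕ∞) ψ :=
    Real.smoothTransition.contDiff.comp (by fun_prop)
  have hψc : Continuous ψ := hψ.continuous
  have hd : ∀ t, HasDerivAt (fun t => ∫ u in (-(1/4) : ℝ)..t, ψ u) (ψ t) t := fun t =>
    intervalIntegral.integral_hasDerivAt_right (hψc.intervalIntegrable _ _)
      (hψc.stronglyMeasurableAtFilter _ _) hψc.continuousAt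
  have hsym : ∀ u, ψ (-u) = 1 - ψ u := by
    intro u
    have := st_symm (2 * u + 1/2)
    have e : 2 * -u + 1/2 = 1 - (2 * u + 1/2) := by ring
    simp only [ψ, e]
    linarith
  have hI : ∫ u in (-(1/4) : ℝ)..(1/4), ψ u = 1/4 := by
    have h1 : ∫ u in (-(1/4) : ℝ)..(1/4), ψ (-u) = ∫ u in (-(1/4) : ℝ)..(1/4), ψ u := by
      rw [intervalIntegral.integral_comp_neg, neg_neg]
    simp only [hsym] at h1
    rw [intervalIntegral.integral_sub (by simp) (hψc.intervalIntegrable _ _)] at h1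
    simp only [intervalIntegral.integral_const, smul_eq_mul] at h1
    linarith
  refine ⟨fun t => ∫ u in (-(1/4) : ℝ)..t, ψ u, ψ, ?_, hψ, hd, ?_, ?_, ?_, ?_, ?_⟩
  · rw [contDiff_infty_iff_deriv]
    refine ⟨fun t => (hd t).differentiableAt, ?_⟩
    rw [show deriv (fun t => ∫ u in (-(1/4) : ℝ)..t, ψ u) = ψ from funext fun t => (hd t).deriv]
    exact hψ
  · exact fun t => Real.smoothTransition.nonneg _
  · exact fun t => Real.smoothTransition.le_one _
  · intro x y h
    exact st_mono (by linarith)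
  · intro t ht
    have : Set.EqOn ψ (fun _ => (0:ℝ)) (Set.uIcc (-(1/4)) t) := by
      intro u hu
      rw [Set.uIcc_of_ge ht] at hu
      exact Real.smoothTransition.zero_of_nonpos (by linarith [hu.2])
    simp only
    rw [intervalIntegral.integral_congr this]
    simp
  · intro t ht
    have : Set.EqOn ψ (fun _ => (1:ℝ)) (Set.uIcc (1/4) t) := by
      intro u hu
      rw [Set.uIcc_of_le ht] at hu
      exact Real.smoothTransition.one_of_one_le (by linarith [hu.1])
    simp only
    rw [← intervalIntegral.integral_add_adjacent_intervals (b := 1/4)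
      (hψc.intervalIntegrable _ _) (hψc.intervalIntegrable _ _),
      intervalIntegral.integral_congr this, hI]
    simp

/-- **Calculus interpolation lemma** (Lemma 4 of the paper).
For every real constant `A` with `0 < A ≤ 1`, there is a smooth function
`G` on `[-1, 1]` (modelled as a smooth function on `ℝ`, with all conditions
imposed on `[-1, 1]`) which is strictly increasing and convex on `[-1, 1]`,
agrees with `A * (exp s - exp (-1)) - 1` near `s = -1`, and agrees with
`2 * s` near `s = 0`. -/
theorem calculus_interpolation_lemma (A : ℝ) (hA0 : 0 < A) (hA1 : A ≤ 1) :
    ∃ G : ℝ → ℝ, ContDiff ℝ (⊤ : ℕ∞) G ∧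
      (∀ s ∈ Set.Icc (-1 : ℝ) 1, 0 < deriv G s) ∧
      (∀ s ∈ Set.Icc (-1 : ℝ) 1, 0 ≤ deriv (deriv G) s) ∧
      (∃ δ > (0 : ℝ), ∀ s ∈ Set.Icc (-1 : ℝ) (-1 + δ),
        G s = A * (Real.exp s - Real.exp (-1)) - 1) ∧
      (∃ ε > (0 : ℝ), ∀ s ∈ Set.Icc (-1 : ℝ) 1, |s| ≤ ε → G s = 2 * s) := by
  obtain ⟨φ, ψ, hφ, hψ, hd, h0, h1, hm, hl, hr⟩ := exists_phi
  let g : ℝ → ℝ := fun s => A * (Real.exp s - Real.exp (-1)) - 1 - 2 * s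
  have hg : ContDiff ℝ (⊤ : ℕ∞) g := by fun_prop
  have hgd : ∀ s, HasDerivAt g (A * Real.exp s - 2) s := by
    intro s
    have := ((((Real.hasDerivAt_exp s).sub_const (Real.exp (-1))).const_mul A).sub_const 1).sub
      ((hasDerivAt_id s).const_mul 2)
    rw [mul_one] at this
    exact this
  let G : ℝ → ℝ := fun s => 2 * s + φ (g s)
  have hGd : ∀ s, HasDerivAt G (2 + ψ (g s) * (A * Real.exp s - 2)) s := by
    intro s
    have := ((hasDerivAt_id s).const_mul 2).add ((hd (g s)).comp s (hgd s))
    rw [mul_one] at this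
    exact this
  have hG' : deriv G = fun s => 2 + ψ (g s) * (A * Real.exp s - 2) :=
    funext fun s => (hGd s).deriv
  refine ⟨G, ?_, ?_, ?_, ?_, ?_⟩
  · have := hφ.comp hg
    exact (contDiff_const.mul contDiff_id).add this
  · intro s _
    rw [hG']
    have hp : 0 < A * Real.exp s := by positivity
    have ha := h0 (g s)
    have hb := h1 (g s)
    simp only
    rcases ha.eq_or_lt with h | h
    · rw [← h]; norm_num
    · have := mul_pos h hp
      nlinarith
  · intro s _
    rw [hG']
    have hψd : HasDerivAt ψ (deriv ψ (g s)) (g s) :=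
      (hψ.differentiable (by simp) (g s)).hasDerivAt
    have h2 : HasDerivAt (fun s => A * Real.exp s - 2) (A * Real.exp s) s :=
      ((Real.hasDerivAt_exp s).const_mul A).sub_const 2
    have h3 := (((hψd.comp s (hgd s)).mul h2).const_add 2).deriv
    have h4 : deriv (fun s => 2 + ψ (g s) * (A * Real.exp s - 2)) s = _ := h3
    rw [h4]
    have h5 : 0 ≤ deriv ψ (g s) := hm.deriv_nonneg
    have h6 := h0 (g s)
    have h7 : 0 ≤ ψ (g s) * (A * Real.exp s) := by positivity
    have h8 := mul_nonneg h5 (sq_nonneg (A * Real.exp s - 2))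
    simp only [Function.comp_apply]
    nlinarith
  · refine ⟨1/4, by norm_num, ?_⟩
    intro s hs
    have he : Real.exp (-1) ≤ Real.exp s := Real.exp_le_exp.2 hs.1
    have hp : 0 ≤ A * (Real.exp s - Real.exp (-1)) := mul_nonneg hA0.le (by linarith)
    have hgs : g s ≥ 1/4 := by
      simp only [g]
      linarith [hs.2]
    simp only [G, hr _ hgs]
    simp only [g]
    ring
  · refine ⟨1/100, by norm_num, ?_⟩
    intro s hs hs'
    obtain ⟨hs1, hs2⟩ := abs_le.1 hs'
    have he : (0.36 : ℝ) ≤ Real.exp (-1) := by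
      have := Real.exp_neg_one_gt_d9
      linarith
    have he' : Real.exp s ≤ 1.02 := by
      have h := Real.add_one_le_exp (-s)
      have hm' : Real.exp s * Real.exp (-s) = 1 := by rw [← Real.exp_add]; simp
      nlinarith [Real.exp_pos s]
    have hgs : g s ≤ -(1/4) := by
      simp only [g]
      nlinarith
    simp only [G, hl _ hgs]
    ring
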